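/- Adaptive exponential weights for squared estimation error: Let Φ be a finite set with |Φ| ≥ 2, T ≥ 1, and let (Ω, 𝔉, P) be a probability space with filtration 𝔉_1 ⊆ ⋯ ⊆ 𝔉_{T+1}. Let 𝒯 : Φ → Φ be a fixed map. For each t let Δ_t : Φ × Φ → [0, 1] be a random function that is 𝔉_{t+1}-measurable, and let ρ_t ∈ Δ(Φ) be 𝔉_t-measurable with ρ_1 the uniform distribution. Assume that for all φ, φ′ ∈ Φ and all t, E[(Δ_t(φ′, φ) − Δ_t(𝒯φ, φ))² | 𝔉_t] ≤ 4 · E[Δ_t(φ′, φ) − Δ_t(𝒯φ, φ) | 𝔉_t] almost surely. Define q_1(·|φ) uniform on Φ for each φ, and for t ≥ 1, q_{t+1}(φ′|φ) ∝ exp( −α_t(φ) · Σ_{s=1}^t ρ_s(φ) Δ_s(φ′, φ) ) where α_t(φ) = 1 / (16 · max_{s ≤ t} ρ_s(φ)). Then for every δ ∈ (0,1), with probability at least 1 − δ, Σ_{t=1}^T E_{φ∼ρ_t} E_{φ′∼q_t(·|φ)} [ Δ_t(φ′, φ) − Δ_t(𝒯φ, φ) ] ≤ 32 · ( Σ_{φ∈Φ}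 max_{t ≤ T} ρ_t(φ) ) · log|Φ| + 72 · log(1/δ). -/

import Mathlib

/-! The proof splits into a pathwise regret bound and an exponential supermartingale.

Write `x = Δ_t(φ', φ) - Δ_t(𝒯φ, φ) ∈ [-1, 1]`, let `Y_t` and `V_t` be the averages of `x` and `x²`
under the weights `ρ_t(φ) q_t(φ' | φ)`, and `M_t(φ) = max_{s ≤ t} ρ_s(φ)`.

*Regret* (`hedge_regret`). Fix `φ`. Subtracting the loss of `𝒯φ` does not change `q_t`, so `q_{t+1}`
is the Gibbs measure of the potential `b log ((1/N) ∑ exp (-X_t / b))` with `b = 16 M_t`, where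
`X_t(φ') = ∑_{s ≤ t} ρ_s x_s(φ')`. This potential is antitone in `b` (power means,
`softmax_antitone`), so letting `M` grow only helps. The weights `q_{t+1}` use `M_t` and not
`M_{t+1}`, so `ρ_{t+1} / b` may be large; the part of `ρ_{t+1}` exceeding `M_t` is exactly
`M_{t+1} - M_t`, costs at most twice this amount (`mix_step`), and telescopes. As the comparator
`𝒯φ` has `X = 0`, summing over `φ` gives
`∑ Y_t ≤ (1/16) ∑ V_t + (2 + 16 log N) ∑_φ M_T(φ)`.

*Concentration* (`exp_supermartingale`). Since `V² ≤ V`, `Y² ≤ V` and `|Y| ≤ 1`, one has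
`(V - 6Y)² ≤ 49 V`, hence `exp ((V - 6Y)/98) ≤ 1 + (3/196) (V - 4Y)`, whose conditional
expectation is at most `1` by the moment assumption. Markov's inequality gives
`∑ V_t ≤ 6 ∑ Y_t + 98 log (1/δ)` with probability at least `1 - δ`.

Combining, `(10/16) ∑ Y_t ≤ (2 + 16 log N) ∑_φ M_T(φ) + (98/16) log (1/δ)`, and `log N ≥ 1/2`
absorbs the constant `2`. -/

open MeasureTheory Finset

/-! ### Running maxima -/

/-- The running maximum `max_{1 ≤ s ≤ t} r s`; the value at `t = 0` is `r 1`, so that the formula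
defining the weights also covers the uniform weights of the first round. -/
noncomputable def runningMax (r : ℕ → ℝ) : ℕ → ℝ
  | 0 => r 1
  | t + 1 => max (runningMax r t) (r (t + 1))

lemma sup'_eq_runningMax (r : ℕ → ℝ) (t : ℕ) (ht : 1 ≤ t) :
    (Icc 1 t).sup' (Finset.nonempty_Icc.mpr ht) r = runningMax r t := by
  induction t, ht using Nat.le_induction with
  | base => simp [runningMax]
  | succ n hn ih =>
    rw [runningMax, ← ih]
    apply le_antisymm
    · apply Finset.sup'_le
      intro b hb
      rcases (Finset.mem_Icc.1 hb).2.eq_or_lt with h | h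
      · rw [h]; exact le_max_right _ _
      · exact le_max_of_le_left
          (Finset.le_sup' r (Finset.mem_Icc.2 ⟨(Finset.mem_Icc.1 hb).1, by omega⟩))
    · apply max_le
      · apply Finset.sup'_le
        intro b hb
        exact Finset.le_sup' r (Finset.mem_Icc.2 ⟨(Finset.mem_Icc.1 hb).1,
          by have := (Finset.mem_Icc.1 hb).2; omega⟩)
      · exact Finset.le_sup' r (Finset.mem_Icc.2 ⟨by omega, le_rfl⟩)

lemma runningMax_pos {r : ℕ → ℝ} (h : 0 < r 1) (t : ℕ) : 0 < runningMax r t := by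
  induction t with
  | zero => exact h
  | succ n ih => exact lt_max_of_lt_left ih

/-! ### Regret of exponential weights with adaptive learning rate -/

/-- The normalised log-partition function at temperature `b` is antitone in `b`, because the
`b'/b`-th power mean dominates the arithmetic mean for `b ≤ b'`. -/
lemma softmax_antitone {ι : Type*} [Fintype ι] [Nonempty ι] (u : ι → ℝ) {b b' : ℝ}
    (hb : 0 < b) (hbb : b ≤ b') :
    b' * Real.log (∑ i, 1 / (Fintype.card ι : ℝ) * Real.exp (u i / b')) ≤
      b * Real.log (∑ i, 1 / (Fintype.card ι : ℝ) * Real.exp (u i / b)) := by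
  have hb' : 0 < b' := hb.trans_le hbb
  have hN : (0 : ℝ) < Fintype.card ι := by exact_mod_cast Fintype.card_pos
  have hpos : 0 < ∑ i, 1 / (Fintype.card ι : ℝ) * Real.exp (u i / b') :=
    Finset.sum_pos (fun i _ => by positivity) Finset.univ_nonempty
  have key := Real.rpow_arith_mean_le_arith_mean_rpow Finset.univ
    (fun _ : ι => 1 / (Fintype.card ι : ℝ)) (fun i => Real.exp (u i / b'))
    (fun _ _ => by positivity) (by simp) (fun _ _ => (Real.exp_pos _).le)
    (p := b' / b) ((one_le_div hb).2 hbb)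
  have e : ∀ i, Real.exp (u i / b') ^ (b' / b) = Real.exp (u i / b) := by
    intro i
    rw [← Real.exp_mul]
    congr 1
    field_simp
  simp only [e] at key
  have := Real.log_le_log (Real.rpow_pos_of_pos hpos _) key
  rw [Real.log_rpow hpos] at this
  calc _ = b * (b' / b * Real.log (∑ i, 1 / (Fintype.card ι : ℝ) * Real.exp (u i / b'))) := by
        field_simp
    _ ≤ _ := by gcongr

/-- One-round bound on the mixed loss at temperature `16 m`. The step size `r` may exceed `m`; it is
split as `min r m` plus the excess, the former being controlled by `exp y ≤ 1 + y + y²`. -/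
lemma mix_step {ι : Type*} [Fintype ι] (p x : ι → ℝ) (hp : ∀ i, 0 ≤ p i) (hp1 : ∑ i, p i = 1)
    (hx : ∀ i, |x i| ≤ 1) {m r : ℝ} (hm : 0 < m) (hr : 0 ≤ r) :
    16 * m * Real.log (∑ i, p i * Real.exp (-(r * x i) / (16 * m))) ≤
      -(r * ∑ i, p i * x i) + 1 / 16 * (r * ∑ i, p i * x i ^ 2) + 2 * (max m r - m) := by
  set s := min r m with hs
  have hs0 : 0 ≤ s := le_min hr hm.le
  have hsm : s ≤ m := min_le_right _ _
  have hsr : s ≤ r := min_le_left _ _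
  have hmax : max m r - m = r - s := by
    rcases le_total r m with h | h <;> simp [hs, h]
  set B := 16 * m with hB
  have hBpos : 0 < B := by positivity
  set A := ∑ i, p i * x i
  set C := ∑ i, p i * x i ^ 2
  have hA : |A| ≤ 1 := by
    calc |A| ≤ ∑ i, |p i * x i| := Finset.abs_sum_le_sum_abs _ _
      _ ≤ ∑ i, p i := by
        gcongr with i
        rw [abs_mul, abs_of_nonneg (hp i)]
        exact mul_le_of_le_one_right (hp i) (hx i)
      _ = 1 := hp1
  have hC : 0 ≤ C := Finset.sum_nonneg fun i _ => mul_nonneg (hp i) (sq_nonneg _)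
  have hpt : ∀ i, Real.exp (-(r * x i) / B) ≤
      Real.exp ((r - s) / B) * (1 + -(s * x i) / B + (-(s * x i) / B) ^ 2) := by
    intro i
    have h1 : -(r * x i) / B ≤ (r - s) / B + -(s * x i) / B := by
      rw [← add_div]
      gcongr
      nlinarith [abs_le.1 (hx i)]
    have h2 : |-(s * x i) / B| ≤ 1 := by
      rw [abs_div, abs_neg, abs_mul, abs_of_nonneg hs0, abs_of_pos hBpos, div_le_one hBpos]
      nlinarith [mul_le_of_le_one_right hs0 (hx i)]
    have h3 := (abs_le.1 (Real.abs_exp_sub_one_sub_id_le h2)).2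
    calc _ ≤ Real.exp ((r - s) / B + -(s * x i) / B) := Real.exp_le_exp.2 h1
      _ = Real.exp ((r - s) / B) * Real.exp (-(s * x i) / B) := Real.exp_add _ _
      _ ≤ _ := by
        gcongr
        linarith
  have hsum : ∑ i, p i * Real.exp (-(r * x i) / B) ≤
      Real.exp ((r - s) / B) * (1 + (-(s * A) / B + s ^ 2 * C / B ^ 2)) := by
    calc _ ≤ ∑ i, p i *
          (Real.exp ((r - s) / B) * (1 + -(s * x i) / B + (-(s * x i) / B) ^ 2)) :=
        Finset.sum_le_sum fun i _ => mul_le_mul_of_nonneg_left (hpt i) (hp i)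
      _ = Real.exp ((r - s) / B) *
          (∑ i, p i + (-(s * A) / B + s ^ 2 * C / B ^ 2)) := by
        simp only [A, C, Finset.mul_sum, ← Finset.sum_neg_distrib, Finset.sum_div,
          ← Finset.sum_add_distrib]
        refine Finset.sum_congr rfl fun i _ => ?_
        field_simp
        ring
      _ = _ := by rw [hp1]
  have hpos : 0 < ∑ i, p i * Real.exp (-(r * x i) / B) := by
    refine (Finset.sum_nonneg fun i _ => mul_nonneg (hp i) (Real.exp_pos _).le).lt_of_ne' ?_
    intro h0
    rw [Finset.sum_eq_zero_iff_of_nonneg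
      fun i _ => mul_nonneg (hp i) (Real.exp_pos _).le] at h0
    have : ∑ i, p i = 0 := Finset.sum_eq_zero fun i hi =>
      (mul_eq_zero.1 (h0 i hi)).resolve_right (Real.exp_pos _).ne'
    linarith
  have hlog : Real.log (∑ i, p i * Real.exp (-(r * x i) / B)) ≤
      (r - s) / B + (-(s * A) / B + s ^ 2 * C / B ^ 2) := by
    rw [Real.log_le_iff_le_exp hpos, Real.exp_add]
    refine hsum.trans ?_
    gcongr
    linarith [Real.add_one_le_exp (-(s * A) / B + s ^ 2 * C / B ^ 2)]
  have h4 : B * Real.log (∑ i, p i * Real.exp (-(r * x i) / B)) ≤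
      (r - s) - s * A + s ^ 2 * C / B := by
    calc _ ≤ B * ((r - s) / B + (-(s * A) / B + s ^ 2 * C / B ^ 2)) := by gcongr
      _ = _ := by field_simp; ring
  have h5 : s ^ 2 * C / B ≤ 1 / 16 * (r * C) := by
    rw [div_le_iff₀ hBpos, hB]
    have : s ^ 2 ≤ r * m := by nlinarith
    nlinarith [mul_le_mul_of_nonneg_right this hC]
  rw [hmax]
  nlinarith [abs_le.1 hA]

/-- Regret of exponential weights with learning rate `1 / (16 max_{s ≤ t} r s)`, relative to a
comparator `i₀` of zero loss, where `r t * x t i` is the loss of `i` in round `t`. -/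
lemma hedge_regret {ι : Type*} [Fintype ι] (r : ℕ → ℝ) (x p : ℕ → ι → ℝ) (T : ℕ)
    (hr1 : 0 < r 1) (hr : ∀ t ∈ Icc 1 T, 0 ≤ r t) (hx : ∀ t ∈ Icc 1 T, ∀ i, |x t i| ≤ 1)
    (i₀ : ι) (hx0 : ∀ t, x t i₀ = 0)
    (hp : ∀ t < T, ∀ i, p (t + 1) i =
      Real.exp (-(∑ s ∈ Icc 1 t, r s * x s i) / (16 * runningMax r t)) /
        ∑ j, Real.exp (-(∑ s ∈ Icc 1 t, r s * x s j) / (16 * runningMax r t))) :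
    ∑ t ∈ Icc 1 T, r t * ∑ i, p t i * x t i ≤
      1 / 16 * (∑ t ∈ Icc 1 T, r t * ∑ i, p t i * x t i ^ 2) +
        (2 + 16 * Real.log (Fintype.card ι)) * runningMax r T := by
  have : Nonempty ι := ⟨i₀⟩
  have hN : (0 : ℝ) < Fintype.card ι := by exact_mod_cast Fintype.card_pos
  have hM := runningMax_pos hr1
  let X : ℕ → ι → ℝ := fun t i => -(∑ s ∈ Icc 1 t, r s * x s i)
  let F : ℕ → ℝ → ℝ := fun t b =>
    b * Real.log (∑ i, 1 / (Fintype.card ι : ℝ) * Real.exp (X t i / b))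
  have main : ∀ t ≤ T, F t (16 * runningMax r t) ≤
      -(∑ s ∈ Icc 1 t, r s * ∑ i, p s i * x s i) +
      1 / 16 * (∑ s ∈ Icc 1 t, r s * ∑ i, p s i * x s i ^ 2) +
        2 * (runningMax r t - r 1) := by
    intro t
    induction t with
    | zero =>
      intro _
      simp [F, X, runningMax]
    | succ t ih =>
      intro ht
      have ih := ih (by omega)
      have hmem : t + 1 ∈ Icc 1 T := Finset.mem_Icc.2 ⟨by omega, ht⟩
      have hZ : 0 < ∑ j, Real.exp (X t j / (16 * runningMax r t)) :=
        Finset.sum_pos (fun _ _ => Real.exp_pos _) Finset.univ_nonempty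
      have hp' : ∀ i, p (t + 1) i = Real.exp (X t i / (16 * runningMax r t)) /
          ∑ j, Real.exp (X t j / (16 * runningMax r t)) := hp t (by omega)
      have hp0 : ∀ i, 0 ≤ p (t + 1) i := fun i => by rw [hp']; positivity
      have hp1 : ∑ i, p (t + 1) i = 1 := by
        simp only [hp', ← Finset.sum_div]
        exact div_self hZ.ne'
      have hmix := mix_step (p (t + 1)) (x (t + 1)) hp0 hp1 (hx _ hmem) (hM t) (hr _ hmem)
      have hanti : F (t + 1) (16 * runningMax r (t + 1)) ≤ F (t + 1) (16 * runningMax r t) :=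
        softmax_antitone (X (t + 1)) (by have := hM t; positivity)
          (by have : runningMax r t ≤ runningMax r (t + 1) := le_max_left _ _
              linarith)
      have hXs : ∀ i, X (t + 1) i = X t i + -(r (t + 1) * x (t + 1) i) := by
        intro i
        simp only [X]
        rw [Finset.sum_Icc_succ_top (by omega)]
        ring
      have hsplit : ∑ i, 1 / (Fintype.card ι : ℝ) *
            Real.exp (X (t + 1) i / (16 * runningMax r t)) =
          (∑ i, 1 / (Fintype.card ι : ℝ) * Real.exp (X t i / (16 * runningMax r t))) *
          ∑ i, p (t + 1) i *
            Real.exp (-(r (t + 1) * x (t + 1) i) / (16 * runningMax r t)) := by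
        rw [← Finset.mul_sum, ← Finset.mul_sum, mul_assoc]
        congr 1
        rw [Finset.mul_sum]
        refine Finset.sum_congr rfl fun i _ => ?_
        rw [hp', hXs, add_div, Real.exp_add]
        field_simp
      have hpos2 : 0 < ∑ i, p (t + 1) i *
            Real.exp (-(r (t + 1) * x (t + 1) i) / (16 * runningMax r t)) :=
        Finset.sum_pos (fun i _ => by rw [hp']; positivity) Finset.univ_nonempty
      have hpos1 : 0 < ∑ i, 1 / (Fintype.card ι : ℝ) *
          Real.exp (X t i / (16 * runningMax r t)) :=
        Finset.sum_pos (fun i _ => by positivity) Finset.univ_nonempty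
      have hF : F (t + 1) (16 * runningMax r t) = F t (16 * runningMax r t) +
          16 * runningMax r t * Real.log (∑ i, p (t + 1) i *
            Real.exp (-(r (t + 1) * x (t + 1) i) / (16 * runningMax r t))) := by
        simp only [F]
        rw [hsplit, Real.log_mul hpos1.ne' hpos2.ne', mul_add]
      rw [Finset.sum_Icc_succ_top (by omega), Finset.sum_Icc_succ_top (by omega)]
      have hR : runningMax r (t + 1) = max (runningMax r t) (r (t + 1)) := rfl
      rw [hR] at hanti ⊢
      linarith
  have hlow : -(16 * runningMax r T * Real.log (Fintype.card ι)) ≤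
      F T (16 * runningMax r T) := by
    have h1 : 1 / (Fintype.card ι : ℝ) ≤
        ∑ i, 1 / (Fintype.card ι : ℝ) * Real.exp (X T i / (16 * runningMax r T)) := by
      refine le_trans (le_of_eq ?_) (Finset.single_le_sum
        (f := fun i => 1 / (Fintype.card ι : ℝ) * Real.exp (X T i / (16 * runningMax r T)))
        (fun i _ => by positivity) (Finset.mem_univ i₀))
      simp [X, hx0]
    have h2 := Real.log_le_log (by positivity) h1
    rw [one_div, Real.log_inv] at h2
    have := mul_le_mul_of_nonneg_left h2 (by have := hM T; positivity : 0 ≤ 16 * runningMax r T)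
    simp only [F, one_div]
    linarith
  have := main T le_rfl
  linarith

/-! ### Exponential supermartingale -/

/-- A function with nonpositive conditional expectation has nonpositive integral against a
nonnegative weight measurable with respect to the conditioning σ-algebra. -/
lemma integral_mul_nonpos_of_condExp_nonpos {Ω : Type*} {m m0 : MeasurableSpace Ω} (hm : m ≤ m0)
    (P : Measure Ω) [IsProbabilityMeasure P] {H f : Ω → ℝ} (hH : StronglyMeasurable[m] H)
    (hH0 : ∀ ω, 0 ≤ H ω) (hf : Integrable f P) (hHf : Integrable (fun ω => H ω * f ω) P)
    (hc : ∀ᵐ ω ∂P, (P[f | m]) ω ≤ 0) :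
    ∫ ω, H ω * f ω ∂P ≤ 0 := by
  have h := condExp_mul_of_stronglyMeasurable_left hH hHf hf
  calc ∫ ω, H ω * f ω ∂P = ∫ ω, (P[H * f | m]) ω ∂P := (integral_condExp hm).symm
    _ ≤ 0 := by
      apply integral_nonpos_of_ae
      filter_upwards [h, hc] with ω h1 h2
      rw [h1]
      exact mul_nonpos_of_nonneg_of_nonpos (hH0 ω) h2

/-- For weighted means `V` of `x²` and `Y` of `x`, the inequality `(V - 6Y)² ≤ 49 V` turns
`exp y ≤ 1 + y + y²` into a bound that is linear in `V - 4Y`, the quantity controlled by the moment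
assumption. -/
lemma exp_step {ι : Type*} [Fintype ι] (w x : ι → ℝ) (hw : ∀ i, 0 ≤ w i) (hw1 : ∑ i, w i = 1)
    (hx : ∀ i, |x i| ≤ 1) :
    |(∑ i, w i * x i ^ 2) - 6 * ∑ i, w i * x i| ≤ 7 ∧
    Real.exp (1 / 98 * ((∑ i, w i * x i ^ 2) - 6 * ∑ i, w i * x i)) ≤
      1 + 3 / 196 * ∑ i, w i * (x i ^ 2 - 4 * x i) := by
  set Y := ∑ i, w i * x i with hY
  set V := ∑ i, w i * x i ^ 2 with hV
  have hVY : ∑ i, w i * (x i ^ 2 - 4 * x i) = V - 4 * Y := by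
    rw [hV, hY, Finset.mul_sum, ← Finset.sum_sub_distrib]
    exact Finset.sum_congr rfl fun i _ => by ring
  have hV0 : 0 ≤ V := Finset.sum_nonneg fun i _ => mul_nonneg (hw i) (sq_nonneg _)
  have hV1 : V ≤ 1 := by
    rw [← hw1]
    exact Finset.sum_le_sum fun i _ => mul_le_of_le_one_right (hw i)
      ((sq_le_one_iff_abs_le_one _).2 (hx i))
  have hYV : Y ^ 2 ≤ V := by
    have h : 0 ≤ ∑ i, w i * (x i - Y) ^ 2 :=
      Finset.sum_nonneg fun i _ => mul_nonneg (hw i) (sq_nonneg _)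
    have e : ∀ c, ∑ i, w i * (x i - c) ^ 2 = V - 2 * c * Y + c ^ 2 * ∑ i, w i := by
      intro c
      rw [hV, hY, Finset.mul_sum, Finset.mul_sum, ← Finset.sum_sub_distrib,
        ← Finset.sum_add_distrib]
      exact Finset.sum_congr rfl fun i _ => by ring
    rw [e, hw1] at h
    nlinarith
  have hY1 : |Y| ≤ 1 := (sq_le_one_iff_abs_le_one _).1 (hYV.trans hV1)
  obtain ⟨hYl, hYu⟩ := abs_le.1 hY1
  have h7 : |V - 6 * Y| ≤ 7 := abs_le.2 ⟨by linarith, by linarith⟩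
  refine ⟨h7, ?_⟩
  have hsq : (V - 6 * Y) ^ 2 ≤ 49 * V := by nlinarith [mul_nonneg hV0 (by linarith : 0 ≤ 1 + Y)]
  have h1 : |1 / 98 * (V - 6 * Y)| ≤ 1 := by
    rw [abs_mul, abs_of_pos (by norm_num : (0 : ℝ) < 1 / 98)]
    linarith
  have h2 := (abs_le.1 (Real.abs_exp_sub_one_sub_id_le h1)).2
  rw [hVY]
  nlinarith

lemma measurable_weighted_sum {Ω ι : Type*} [Fintype ι] {m : MeasurableSpace Ω}
    (t : ℕ) (w x : ℕ → Ω → ι → ℝ)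
    (hw : ∀ s ∈ Icc 1 t, ∀ i, Measurable (fun ω => w s ω i))
    (hx : ∀ s ∈ Icc 1 t, ∀ i, Measurable (fun ω => x s ω i)) :
    Measurable (fun ω => ∑ s ∈ Icc 1 t,
      ((∑ i, w s ω i * x s ω i ^ 2) - 6 * ∑ i, w s ω i * x s ω i)) := by
  refine Finset.measurable_fun_sum _ fun s hs => Measurable.sub ?_ (Measurable.const_mul ?_ _)
  · exact Finset.measurable_fun_sum _ fun i _ => (hw s hs i).mul ((hx s hs i).pow_const 2)
  · exact Finset.measurable_fun_sum _ fun i _ => (hw s hs i).mul (hx s hs i)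

/-- With predictable convex weights `w` and increments `x` satisfying
`E[x² | ℱ_t] ≤ 4 E[x | ℱ_t]`, the process `exp ((1/98) ∑ (V_s - 6 Y_s))` has expectation at
most `1`. -/
lemma exp_supermartingale {Ω : Type*} {m0 : MeasurableSpace Ω} (P : Measure Ω)
    [IsProbabilityMeasure P] {ι : Type*} [Fintype ι] (T : ℕ) (ℱ : Filtration ℕ m0)
    (w x : ℕ → Ω → ι → ℝ)
    (hwm : ∀ t ∈ Icc 1 T, ∀ i, Measurable[ℱ t] (fun ω => w t ω i))
    (hxm : ∀ t ∈ Icc 1 T, ∀ i, Measurable[ℱ (t + 1)] (fun ω => x t ω i))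
    (hw : ∀ t ∈ Icc 1 T, ∀ ω i, 0 ≤ w t ω i) (hw1 : ∀ t ∈ Icc 1 T, ∀ ω, ∑ i, w t ω i = 1)
    (hx : ∀ t ∈ Icc 1 T, ∀ ω i, |x t ω i| ≤ 1)
    (hmom : ∀ t ∈ Icc 1 T, ∀ i, ∀ᵐ ω ∂P,
      (P[fun ω' => x t ω' i ^ 2 | ℱ t]) ω ≤ 4 * (P[fun ω' => x t ω' i | ℱ t]) ω) :
    ∀ t ≤ T, ∫ ω, Real.exp (1 / 98 * ∑ s ∈ Icc 1 t,
      ((∑ i, w s ω i * x s ω i ^ 2) - 6 * ∑ i, w s ω i * x s ω i)) ∂P ≤ 1 := by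
  intro t
  induction t with
  | zero => intro _; simp
  | succ t ih =>
    intro ht
    have ih := ih (by omega)
    have hmem : t + 1 ∈ Icc 1 T := Finset.mem_Icc.2 ⟨by omega, ht⟩
    have hsub : ∀ s ∈ Icc 1 t, s ∈ Icc 1 T := fun s hs =>
      Finset.mem_Icc.2 ⟨(Finset.mem_Icc.1 hs).1, by have := (Finset.mem_Icc.1 hs).2; omega⟩
    set G : Ω → ℝ := fun ω => Real.exp (1 / 98 * ∑ s ∈ Icc 1 t,
      ((∑ i, w s ω i * x s ω i ^ 2) - 6 * ∑ i, w s ω i * x s ω i)) with hG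
    have hGm : Measurable[ℱ (t + 1)] G := by
      apply Measurable.exp
      apply Measurable.const_mul
      refine measurable_weighted_sum t w x (fun s hs i => ?_) (fun s hs i => ?_)
      · exact (hwm s (hsub s hs) i).mono
          (ℱ.mono (by have := (Finset.mem_Icc.1 hs).2; omega)) le_rfl
      · exact (hxm s (hsub s hs) i).mono
          (ℱ.mono (by have := (Finset.mem_Icc.1 hs).2; omega)) le_rfl
    have hG0 : ∀ ω, 0 < G ω := fun ω => Real.exp_pos _
    have hGb : ∀ ω, G ω ≤ Real.exp (1 / 98 * ∑ s ∈ Icc 1 t, 7) := by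
      intro ω
      apply Real.exp_le_exp.2
      gcongr with s hs
      exact (abs_le.1 (exp_step (w s ω) (x s ω) (hw s (hsub s hs) ω) (hw1 s (hsub s hs) ω)
        (hx s (hsub s hs) ω)).1).2
    have hle := ℱ.le (t + 1)
    have hxm0 : ∀ i, Measurable (fun ω => x (t + 1) ω i) := fun i =>
      (hxm _ hmem i).mono (ℱ.le _) le_rfl
    have hwle : ∀ ω i, w (t + 1) ω i ≤ 1 := fun ω i => by
      rw [← hw1 _ hmem ω]
      exact Finset.single_le_sum (fun j _ => hw _ hmem ω j) (Finset.mem_univ i)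
    have hxint : ∀ i, Integrable (fun ω => x (t + 1) ω i) P := fun i =>
      Integrable.of_bound (hxm0 i).aestronglyMeasurable 1 (.of_forall fun ω => hx _ hmem ω i)
    have hx2int : ∀ i, Integrable (fun ω => x (t + 1) ω i ^ 2) P := fun i =>
      Integrable.of_bound ((hxm0 i).pow_const 2).aestronglyMeasurable 1 (.of_forall fun ω => by
        rw [Real.norm_of_nonneg (sq_nonneg _)]
        exact (sq_le_one_iff_abs_le_one _).2 (hx _ hmem ω i))
    have hfint : ∀ i, Integrable (fun ω => x (t + 1) ω i ^ 2 - 4 * x (t + 1) ω i) P := fun i =>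
      (hx2int i).sub ((hxint i).const_mul 4)
    have hHm : ∀ i, Measurable[ℱ (t + 1)] (fun ω => G ω * w (t + 1) ω i) := fun i =>
      hGm.mul (hwm _ hmem i)
    have hHint : ∀ i, Integrable
        (fun ω => (G ω * w (t + 1) ω i) * (x (t + 1) ω i ^ 2 - 4 * x (t + 1) ω i)) P := fun i =>
      (hfint i).bdd_mul (c := Real.exp (1 / 98 * ∑ s ∈ Icc 1 t, 7))
        ((hHm i).mono hle le_rfl).aestronglyMeasurable
        (.of_forall fun ω => by
          rw [Real.norm_of_nonneg (mul_nonneg (hG0 ω).le (hw _ hmem ω i))]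
          exact (mul_le_of_le_one_right (hG0 ω).le (hwle ω i)).trans (hGb ω))
    have hGint : Integrable G P :=
      Integrable.of_bound (hGm.mono hle le_rfl).aestronglyMeasurable _ (.of_forall fun ω => by
        rw [Real.norm_of_nonneg (hG0 ω).le]; exact hGb ω)
    have hneg : ∀ i, ∫ ω, (G ω * w (t + 1) ω i) *
        (x (t + 1) ω i ^ 2 - 4 * x (t + 1) ω i) ∂P ≤ 0 := by
      intro i
      refine integral_mul_nonpos_of_condExp_nonpos hle P (hHm i).stronglyMeasurable
        (fun ω => mul_nonneg (hG0 ω).le (hw _ hmem ω i)) (hfint i) (hHint i) ?_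
      have h1 := condExp_sub (hx2int i) ((hxint i).const_mul 4) (ℱ (t + 1))
      have h2 := condExp_smul (μ := P) (4 : ℝ) (fun ω => x (t + 1) ω i) (ℱ (t + 1))
      filter_upwards [h1, h2, hmom _ hmem i] with ω h1 h2 h3
      have h1' : (P[fun ω => x (t + 1) ω i ^ 2 - 4 * x (t + 1) ω i | ℱ (t + 1)]) ω =
          (P[fun ω => x (t + 1) ω i ^ 2 | ℱ (t + 1)]) ω -
          (P[fun ω => 4 * x (t + 1) ω i | ℱ (t + 1)]) ω := h1
      have h2' : (P[fun ω => 4 * x (t + 1) ω i | ℱ (t + 1)]) ω =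
          4 * (P[fun ω => x (t + 1) ω i | ℱ (t + 1)]) ω := h2
      rw [h1', h2']
      linarith
    have hsumint : Integrable (fun ω => ∑ i, (G ω * w (t + 1) ω i) *
        (x (t + 1) ω i ^ 2 - 4 * x (t + 1) ω i)) P := integrable_finsetSum _ fun i _ => hHint i
    calc _ ≤ ∫ ω, (G ω + 3 / 196 * ∑ i, (G ω * w (t + 1) ω i) *
          (x (t + 1) ω i ^ 2 - 4 * x (t + 1) ω i)) ∂P := by
          refine integral_mono_of_nonneg (.of_forall fun ω => (Real.exp_pos _).le)
            (hGint.add (hsumint.const_mul _)) (.of_forall fun ω => ?_)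
          have := (exp_step (w (t + 1) ω) (x (t + 1) ω) (hw _ hmem ω) (hw1 _ hmem ω)
            (hx _ hmem ω)).2
          dsimp only
          rw [Finset.sum_Icc_succ_top (by omega), mul_add, Real.exp_add]
          refine (mul_le_mul_of_nonneg_left this (Real.exp_pos _).le).trans (le_of_eq ?_)
          simp only [mul_assoc, ← Finset.mul_sum, hG]
          ring
      _ = ∫ ω, G ω ∂P + 3 / 196 * ∑ i, ∫ ω, (G ω * w (t + 1) ω i) *
          (x (t + 1) ω i ^ 2 - 4 * x (t + 1) ω i) ∂P := by
          rw [integral_add hGint (hsumint.const_mul _), integral_const_mul,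
            integral_finsetSum _ fun i _ => hHint i]
      _ ≤ 1 := by
          have := Finset.sum_nonpos fun i (_ : i ∈ Finset.univ) => hneg i
          linarith

/-! ### Combination of the two bounds -/

/-- Adaptive exponential weights for squared estimation error: let `Φ` be finite with
`|Φ| ≥ 2`, `ℱ` a filtration, `𝒯 : Φ → Φ`, and for each round `t` let
`Δf_t : Φ × Φ → [0,1]` be `ℱ_{t+1}`-measurable random functions and `ρ_t ∈ Δ(Φ)` be
`ℱ_t`-measurable with `ρ_1` uniform. Assume
`E[(Δ_t(φ′,φ) − Δ_t(𝒯φ,φ))² | ℱ_t] ≤ 4 E[Δ_t(φ′,φ) − Δ_t(𝒯φ,φ) | ℱ_t]` a.s. Let `q_1(·|φ)`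
be uniform, and `q_{t+1}(φ′|φ) ∝ exp(−α_t(φ) Σ_{s≤t} ρ_s(φ) Δ_s(φ′,φ))` with
`α_t(φ) = 1/(16 max_{s≤t} ρ_s(φ))`. Then for every `δ ∈ (0,1)`, with probability at least
`1 − δ`, `Σ_{t≤T} E_{φ∼ρ_t} E_{φ′∼q_t(·|φ)}[Δ_t(φ′,φ) − Δ_t(𝒯φ,φ)]
  ≤ 32 (Σ_φ max_{t≤T} ρ_t(φ)) log|Φ| + 72 log(1/δ)`. -/
theorem adaptive_exponential_weights_squared_error
    {Ω : Type*} {m0 : MeasurableSpace Ω} (P : Measure Ω) [IsProbabilityMeasure P]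
    {Φ : Type*} [Fintype Φ] (hΦ : 2 ≤ Fintype.card Φ)
    (T : ℕ) (hT : 1 ≤ T)
    (ℱ : Filtration ℕ m0) (𝒯 : Φ → Φ)
    (Δf : ℕ → Ω → Φ → Φ → ℝ)
    (hΔmeas : ∀ t ∈ Icc 1 T, ∀ φ' φ, StronglyMeasurable[ℱ (t + 1)] (fun ω => Δf t ω φ' φ))
    (hΔrange : ∀ t ∈ Icc 1 T, ∀ ω φ' φ, Δf t ω φ' φ ∈ Set.Icc (0 : ℝ) 1)
    (ρ : ℕ → Ω → Φ → ℝ)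
    (hρmeas : ∀ t ∈ Icc 1 T, ∀ φ, StronglyMeasurable[ℱ t] (fun ω => ρ t ω φ))
    (hρdist : ∀ t ∈ Icc 1 T, ∀ ω, (∀ φ, 0 ≤ ρ t ω φ) ∧ ∑ φ, ρ t ω φ = 1)
    (hρ1 : ∀ ω φ, ρ 1 ω φ = 1 / (Fintype.card Φ : ℝ))
    (hmoment : ∀ t ∈ Icc 1 T, ∀ φ' φ, ∀ᵐ ω ∂P,
      (P[fun ω' => (Δf t ω' φ' φ - Δf t ω' (𝒯 φ) φ) ^ 2 | ℱ t]) ω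
        ≤ 4 * (P[fun ω' => Δf t ω' φ' φ - Δf t ω' (𝒯 φ) φ | ℱ t]) ω)
    (q : ℕ → Ω → Φ → Φ → ℝ)
    (hq1 : ∀ ω φ φ', q 1 ω φ φ' = 1 / (Fintype.card Φ : ℝ))
    (hqrec : ∀ t, ∀ ht : 1 ≤ t, t ≤ T → ∀ ω φ φ',
      q (t + 1) ω φ φ' =
        Real.exp (-(1 / (16 * (Icc 1 t).sup' (Finset.nonempty_Icc.mpr ht)
              (fun s => ρ s ω φ))) * ∑ s ∈ Icc 1 t, ρ s ω φ * Δf s ω φ' φ)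
          / ∑ φ'' : Φ, Real.exp (-(1 / (16 * (Icc 1 t).sup' (Finset.nonempty_Icc.mpr ht)
              (fun s => ρ s ω φ))) * ∑ s ∈ Icc 1 t, ρ s ω φ * Δf s ω φ'' φ))
    (δ : ℝ) (hδ0 : 0 < δ) (hδ1 : δ < 1) :
    (1 : ℝ) - δ ≤
      (P {ω | ∑ t ∈ Icc 1 T, ∑ φ, ρ t ω φ * ∑ φ', q t ω φ φ' *
            (Δf t ω φ' φ - Δf t ω (𝒯 φ) φ)
          ≤ 32 * (∑ φ, (Icc 1 T).sup' (Finset.nonempty_Icc.mpr hT) (fun t => ρ t ω φ))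
              * Real.log (Fintype.card Φ)
            + 72 * Real.log (1 / δ)}).toReal := by
  have hN : (2 : ℝ) ≤ Fintype.card Φ := by exact_mod_cast hΦ
  have hN0 : (0 : ℝ) < Fintype.card Φ := by linarith
  have hne : Nonempty Φ := Fintype.card_pos_iff.1 (by omega)
  have hr1 : ∀ ω φ, 0 < ρ 1 ω φ := fun ω φ => by rw [hρ1]; positivity
  let M : ℕ → Ω → Φ → ℝ := fun t ω φ => runningMax (fun s => ρ s ω φ) t
  -- The uniform weights of the first round are the `t = 0` case of the recursion.
  have hqΔ : ∀ t < T, ∀ ω φ φ', q (t + 1) ω φ φ' =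
      Real.exp (-(∑ s ∈ Icc 1 t, ρ s ω φ * Δf s ω φ' φ) / (16 * M t ω φ)) /
        ∑ φ'', Real.exp (-(∑ s ∈ Icc 1 t, ρ s ω φ * Δf s ω φ'' φ) / (16 * M t ω φ)) := by
    intro t ht ω φ φ'
    rcases Nat.eq_zero_or_pos t with h0 | h0
    · subst h0
      simp [hq1]
    · rw [hqrec t h0 ht.le]
      have e : ∀ S : ℝ, -(1 / (16 * (Icc 1 t).sup' (Finset.nonempty_Icc.mpr h0)
          (fun s => ρ s ω φ))) * S = -S / (16 * M t ω φ) := by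
        intro S
        rw [sup'_eq_runningMax _ t h0]
        ring
      simp only [e]
  -- Subtracting the loss of `𝒯 φ` multiplies numerator and denominator by the same factor.
  have hqx : ∀ t < T, ∀ ω φ φ', q (t + 1) ω φ φ' =
      Real.exp (-(∑ s ∈ Icc 1 t, ρ s ω φ * (Δf s ω φ' φ - Δf s ω (𝒯 φ) φ)) /
          (16 * M t ω φ)) /
        ∑ φ'', Real.exp (-(∑ s ∈ Icc 1 t, ρ s ω φ * (Δf s ω φ'' φ - Δf s ω (𝒯 φ) φ)) /
          (16 * M t ω φ)) := by
    intro t ht ω φ φ'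
    have e : ∀ φ'', Real.exp (-(∑ s ∈ Icc 1 t, ρ s ω φ *
        (Δf s ω φ'' φ - Δf s ω (𝒯 φ) φ)) / (16 * M t ω φ)) =
        Real.exp (-(∑ s ∈ Icc 1 t, ρ s ω φ * Δf s ω φ'' φ) / (16 * M t ω φ)) *
        Real.exp ((∑ s ∈ Icc 1 t, ρ s ω φ * Δf s ω (𝒯 φ) φ) / (16 * M t ω φ)) := by
      intro φ''
      rw [← Real.exp_add, ← add_div]
      simp only [mul_sub, Finset.sum_sub_distrib]
      congr 2
      ring
    simp only [e, ← Finset.sum_mul]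
    rw [mul_div_mul_right _ _ (Real.exp_pos _).ne', hqΔ t ht]
  have hq0 : ∀ t ∈ Icc 1 T, ∀ ω φ φ', 0 ≤ q t ω φ φ' := by
    intro t ht ω φ φ'
    obtain ⟨u, rfl⟩ : ∃ u, t = u + 1 := ⟨t - 1, by have := Finset.mem_Icc.1 ht; omega⟩
    rw [hqΔ u (by have := Finset.mem_Icc.1 ht; omega)]
    positivity
  have hqs : ∀ t ∈ Icc 1 T, ∀ ω φ, ∑ φ', q t ω φ φ' = 1 := by
    intro t ht ω φ
    obtain ⟨u, rfl⟩ : ∃ u, t = u + 1 := ⟨t - 1, by have := Finset.mem_Icc.1 ht; omega⟩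
    simp only [hqΔ u (by have := Finset.mem_Icc.1 ht; omega), ← Finset.sum_div]
    exact div_self (Finset.sum_pos (fun _ _ => Real.exp_pos _) Finset.univ_nonempty).ne'
  have hMm : ∀ t < T, ∀ φ, Measurable[ℱ (t + 1)] (fun ω => M t ω φ) := by
    intro t
    induction t with
    | zero => intro _ φ; exact (hρmeas 1 (Finset.mem_Icc.2 ⟨le_rfl, hT⟩) φ).measurable
    | succ t ih =>
      intro ht φ
      refine Measurable.max ((ih (by omega) φ).mono (ℱ.mono (by omega)) le_rfl) ?_
      exact (hρmeas (t + 1) (Finset.mem_Icc.2 ⟨by omega, by omega⟩) φ).measurable.mono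
        (ℱ.mono (by omega)) le_rfl
  have hqm : ∀ t ∈ Icc 1 T, ∀ φ φ', Measurable[ℱ t] (fun ω => q t ω φ φ') := by
    intro t ht φ φ'
    obtain ⟨u, rfl⟩ : ∃ u, t = u + 1 := ⟨t - 1, by have := Finset.mem_Icc.1 ht; omega⟩
    have hu : u < T := by have := Finset.mem_Icc.1 ht; omega
    simp only [hqΔ u hu]
    have hE : ∀ φ'', Measurable[ℱ (u + 1)] (fun ω =>
        Real.exp (-(∑ s ∈ Icc 1 u, ρ s ω φ * Δf s ω φ'' φ) / (16 * M u ω φ))) := by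
      intro φ''
      refine ((Finset.measurable_fun_sum _ fun s hs => ?_).neg.div
        ((hMm u hu φ).const_mul 16)).exp
      have hs' := Finset.mem_Icc.1 hs
      have hsT : s ∈ Icc 1 T := Finset.mem_Icc.2 ⟨hs'.1, by omega⟩
      exact ((hρmeas s hsT φ).measurable.mono (ℱ.mono (by omega)) le_rfl).mul
        ((hΔmeas s hsT φ'' φ).measurable.mono (ℱ.mono (by omega)) le_rfl)
    exact (hE φ').div (Finset.measurable_fun_sum _ fun φ'' _ => hE φ'')
  have hxb : ∀ t ∈ Icc 1 T, ∀ ω φ φ', |Δf t ω φ' φ - Δf t ω (𝒯 φ) φ| ≤ 1 := by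
    intro t ht ω φ φ'
    have h1 := hΔrange t ht ω φ' φ
    have h2 := hΔrange t ht ω (𝒯 φ) φ
    rw [abs_le]
    constructor <;> linarith [h1.1, h1.2, h2.1, h2.2]
  let w : ℕ → Ω → Φ × Φ → ℝ := fun t ω i => ρ t ω i.1 * q t ω i.1 i.2
  let x : ℕ → Ω → Φ × Φ → ℝ := fun t ω i => Δf t ω i.2 i.1 - Δf t ω (𝒯 i.1) i.1
  have hwm : ∀ t ∈ Icc 1 T, ∀ i, Measurable[ℱ t] (fun ω => w t ω i) := fun t ht i =>
    (hρmeas t ht i.1).measurable.mul (hqm t ht i.1 i.2)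
  have hxm : ∀ t ∈ Icc 1 T, ∀ i, Measurable[ℱ (t + 1)] (fun ω => x t ω i) := fun t ht i =>
    (hΔmeas t ht i.2 i.1).measurable.sub (hΔmeas t ht (𝒯 i.1) i.1).measurable
  have hw1 : ∀ t ∈ Icc 1 T, ∀ ω, ∑ i, w t ω i = 1 := by
    intro t ht ω
    simp only [w, Fintype.sum_prod_type, ← Finset.mul_sum, hqs t ht ω, mul_one]
    exact (hρdist t ht ω).2
  let D : Ω → ℝ := fun ω => ∑ s ∈ Icc 1 T,
    ((∑ i, w s ω i * x s ω i ^ 2) - 6 * ∑ i, w s ω i * x s ω i)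
  have hw0 : ∀ t ∈ Icc 1 T, ∀ ω i, 0 ≤ w t ω i := fun t ht ω i =>
    mul_nonneg ((hρdist t ht ω).1 i.1) (hq0 t ht ω i.1 i.2)
  have hsm : ∫ ω, Real.exp (1 / 98 * D ω) ∂P ≤ 1 :=
    exp_supermartingale P T ℱ w x hwm hxm hw0 hw1
      (fun t ht ω i => hxb t ht ω i.1 i.2) (fun t ht i => hmoment t ht i.2 i.1) T le_rfl
  have hDm : Measurable D := measurable_weighted_sum T w x
    (fun s hs i => (hwm s hs i).mono (ℱ.le _) le_rfl)
    (fun s hs i => (hxm s hs i).mono (ℱ.le _) le_rfl)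
  have hEm : Measurable (fun ω => Real.exp (1 / 98 * D ω)) := (hDm.const_mul _).exp
  have hEint : Integrable (fun ω => Real.exp (1 / 98 * D ω)) P := by
    refine Integrable.of_bound hEm.aestronglyMeasurable
      (Real.exp (1 / 98 * ∑ s ∈ Icc 1 T, 7)) (.of_forall fun ω => ?_)
    rw [Real.norm_of_nonneg (Real.exp_pos _).le]
    apply Real.exp_le_exp.2
    simp only [D]
    gcongr with s hs
    exact (abs_le.1 (exp_step (w s ω) (x s ω) (hw0 s hs ω) (hw1 s hs ω)
      (fun i => hxb s hs ω i.1 i.2)).1).2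
  have hbad : P.real {ω | 1 / δ ≤ Real.exp (1 / 98 * D ω)} ≤ δ := by
    have h := mul_meas_ge_le_integral_of_nonneg
      (.of_forall fun ω => (Real.exp_pos (1 / 98 * D ω)).le) hEint (1 / δ)
    have h' := h.trans hsm
    rwa [one_div, inv_mul_le_iff₀ hδ0, mul_one, ← one_div] at h'
  have hgood : 1 - δ ≤ P.real {ω | 1 / δ ≤ Real.exp (1 / 98 * D ω)}ᶜ := by
    rw [probReal_compl_eq_one_sub (measurableSet_le measurable_const hEm)]
    linarith
  refine hgood.trans (measureReal_mono ?_)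
  intro ω hω
  simp only [Set.mem_compl_iff, Set.mem_ofPred_eq, not_le] at hω ⊢
  have hD : D ω ≤ 98 * Real.log (1 / δ) := by
    have := (Real.lt_log_iff_exp_lt (by positivity)).2 hω
    linarith
  set R := ∑ t ∈ Icc 1 T, ∑ φ, ρ t ω φ * ∑ φ', q t ω φ φ' *
    (Δf t ω φ' φ - Δf t ω (𝒯 φ) φ) with hR
  set V := ∑ t ∈ Icc 1 T, ∑ φ, ρ t ω φ * ∑ φ', q t ω φ φ' *
    (Δf t ω φ' φ - Δf t ω (𝒯 φ) φ) ^ 2 with hV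
  have hDRV : D ω = V - 6 * R := by
    simp only [D, w, x, hR, hV, Fintype.sum_prod_type, Finset.sum_sub_distrib, Finset.mul_sum,
      mul_assoc]
  have hsup : ∀ φ, (Icc 1 T).sup' (Finset.nonempty_Icc.mpr hT) (fun t => ρ t ω φ) = M T ω φ :=
    fun φ => sup'_eq_runningMax _ T hT
  simp only [hsup]
  have hreg : R ≤ 1 / 16 * V +
      (2 + 16 * Real.log (Fintype.card Φ)) * ∑ φ, M T ω φ := by
    rw [hR, hV, Finset.sum_comm, Finset.sum_comm (s := Icc 1 T), Finset.mul_sum, Finset.mul_sum,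
      ← Finset.sum_add_distrib]
    refine Finset.sum_le_sum fun φ _ => ?_
    exact hedge_regret (fun t => ρ t ω φ) (fun t φ' => Δf t ω φ' φ - Δf t ω (𝒯 φ) φ)
      (fun t φ' => q t ω φ φ') T (hr1 ω φ) (fun t ht => (hρdist t ht ω).1 φ)
      (fun t ht φ' => hxb t ht ω φ φ') (𝒯 φ) (fun t => sub_self _)
      (fun t ht φ' => hqx t ht ω φ φ')
  have hS : 0 ≤ ∑ φ, M T ω φ := Finset.sum_nonneg fun φ _ =>
    (runningMax_pos (r := fun s => ρ s ω φ) (hr1 ω φ) T).le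
  have hlog : 1 / 2 ≤ Real.log (Fintype.card Φ) := by
    have := Real.log_le_log (by norm_num) hN
    linarith [Real.log_two_gt_d9]
  have hlogδ : 0 ≤ Real.log (1 / δ) := Real.log_nonneg ((one_le_div hδ0).2 hδ1.le)
  have h3 := mul_le_mul_of_nonneg_right hlog hS
  nlinarith
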